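/- Let α > -1 and let f : ℝ₊ → ℝ be Borel measurable such that K_f(z,w) = (2 Re z)^{α/2} (2 Re w)^{α/2} ∫₀^∞ f(t) e^{-t(z+w̄)} dt is well-defined on H₊². Then ∫_{H₊} |K_f(z,w)|² dA(w) = ∫₀^∞ e^{-2xs} f(s)² Γ(α+1) s^{-(α+1)} ds · (2x)^α for every z ∈ H₊ with x = Re z. -/

import Mathlib

open MeasureTheory Complex

/-- The Laplace-type kernel `K_f(z,w) = (2 Re z)^{α/2}(2 Re w)^{α/2}
    ∫₀^∞ f(t) e^{-t(z + conj w)} dt`. -/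
noncomputable def laplaceKernel (α : ℝ) (f : ℝ → ℝ) (z w : ℂ) : ℂ :=
  (((2 * z.re) ^ (α / 2) * (2 * w.re) ^ (α / 2) : ℝ) : ℂ) *
    ∫ t in Set.Ioi (0 : ℝ),
      ((f t : ℝ) : ℂ) * Complex.exp (-(t : ℂ) * (z + (starRingEnd ℂ) w))

/-!
For fixed `z`, the kernel is, up to the weight `(2 Re z)^{α/2} (2 Re w)^{α/2}` and complex
conjugation, the Laplace transform of `F(t) = e^{-t conj z} f(t)` at `w`. On the vertical line
`Re w = u` a Laplace transform is a Fourier transform of `e^{-tu} F(t)` restricted to the half-line,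
so Plancherel evaluates the integral over `Im w`; Tonelli and a Gamma integral in `u` then give the
weight `Γ(α + 1) t^{-(α + 1)}`. All of this takes place in `[0, ∞]`, Plancherel being valid for
every integrable function with both `L²` norms allowed to be infinite.
-/

open scoped FourierTransform SchwartzMap ContDiff ENNReal ComplexConjugate

section Plancherel

variable {V E : Type*} [NormedAddCommGroup V] [InnerProductSpace ℝ V] [FiniteDimensional ℝ V]
  [MeasurableSpace V] [BorelSpace V] [NormedAddCommGroup E]

section NormedSpace

variable [NormedSpace ℂ E]

theorem continuous_fourier_of_integrable {g : V → E} (hg : Integrable g) : Continuous (𝓕 g) :=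
  VectorFourier.fourierIntegral_continuous Real.continuous_fourierChar continuous_inner hg

variable [CompleteSpace E]

theorem integral_fourier_smul_eq_integral_smul_fourier {φ : V → ℂ} {g : V → E}
    (hφ : Integrable φ) (hg : Integrable g) : ∫ ξ, 𝓕 φ ξ • g ξ = ∫ x, φ x • 𝓕 g x := by
  simpa using! VectorFourier.integral_fourierIntegral_smul_eq_flip (L := innerₗ V)
    Real.continuous_fourierChar continuous_inner hφ hg

theorem toTemperedDistribution_toLp_apply {p : ℝ≥0∞} [Fact (1 ≤ p)] {g : V → E}
    (hg : MemLp g p volume) (Φ : 𝓢(V, ℂ)) : (hg.toLp : 𝓢'(V, E)) Φ = ∫ x, Φ x • g x := by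
  rw [Lp.toTemperedDistribution_apply]
  refine integral_congr_ae ?_
  filter_upwards [hg.coeFn_toLp] with x hx
  rw [hx]

theorem ae_eq_of_toTemperedDistribution_apply_eq {p : ℝ≥0∞} [hp : Fact (1 ≤ p)]
    {u : Lp (α := V) E p volume} {g : V → E} (hg : LocallyIntegrable g)
    (h : ∀ Φ : 𝓢(V, ℂ), (u : 𝓢'(V, E)) Φ = ∫ x, Φ x • g x) : u =ᵐ[volume] g := by
  refine ae_eq_of_integral_contDiff_smul_eq ((Lp.memLp u).locallyIntegrable hp.out) hg ?_
  intro φ hφ hφc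
  have hsupp : HasCompactSupport (ofRealCLM ∘ φ) := hφc.comp_left rfl
  have hsmooth : ContDiff ℝ ∞ (ofRealCLM ∘ φ) := by fun_prop
  simpa using h (hsupp.toSchwartzMap hsmooth)

end NormedSpace

variable [InnerProductSpace ℂ E] [CompleteSpace E]

theorem fourier_toLp_ae_eq {g : V → E} (hg : Integrable g) (hg2 : MemLp g 2 volume) :
    (𝓕 (hg2.toLp g) : Lp (α := V) E 2 volume) =ᵐ[volume] 𝓕 g := by
  refine ae_eq_of_toTemperedDistribution_apply_eq
    (continuous_fourier_of_integrable hg).locallyIntegrable fun Φ ↦ ?_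
  rw [← Lp.fourier_toTemperedDistribution_eq, TemperedDistribution.fourier_apply,
    toTemperedDistribution_toLp_apply, SchwartzMap.fourier_coe,
    integral_fourier_smul_eq_integral_smul_fourier Φ.integrable hg]

theorem fourierInv_toLp_fourier_ae_eq {g : V → E} (hg : Integrable g)
    (hg2 : MemLp (𝓕 g) 2 volume) : (𝓕⁻ (hg2.toLp (𝓕 g)) : Lp (α := V) E 2 volume) =ᵐ[volume] g := by
  refine ae_eq_of_toTemperedDistribution_apply_eq hg.locallyIntegrable fun Φ ↦ ?_
  rw [← Lp.fourierInv_toTemperedDistribution_eq, TemperedDistribution.fourierInv_apply,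
    toTemperedDistribution_toLp_apply,
    ← integral_fourier_smul_eq_integral_smul_fourier (𝓕⁻ Φ).integrable hg,
    ← SchwartzMap.fourier_coe, FourierTransform.fourier_fourierInv_eq]

theorem memLp_two_of_memLp_two_fourier {g : V → E} (hg : Integrable g)
    (hg2 : MemLp (𝓕 g) 2 volume) : MemLp g 2 volume :=
  (memLp_congr_ae (fourierInv_toLp_fourier_ae_eq hg hg2)).1 (Lp.memLp _)

theorem eLpNorm_two_fourier {g : V → E} (hg : Integrable g) :
    eLpNorm (𝓕 g) 2 volume = eLpNorm g 2 volume := by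
  by_cases hg2 : MemLp g 2 volume
  · rw [← eLpNorm_congr_ae (fourier_toLp_ae_eq hg hg2), ← eLpNorm_congr_ae hg2.coeFn_toLp,
      ← Lp.enorm_def, ← Lp.enorm_def, enorm_eq_iff_norm_eq, Lp.norm_fourier_eq]
  · have hfourier : ¬ MemLp (𝓕 g) 2 volume := mt (memLp_two_of_memLp_two_fourier hg) hg2
    have hmeas : AEStronglyMeasurable (𝓕 g) volume :=
      (continuous_fourier_of_integrable hg).aestronglyMeasurable
    simp only [MemLp, hg.aestronglyMeasurable, hmeas, true_and, not_lt, top_le_iff]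
      at hg2 hfourier
    rw [hfourier, hg2]

theorem lintegral_enorm_sq_fourier {g : V → E} (hg : Integrable g) :
    ∫⁻ ξ, ‖𝓕 g ξ‖ₑ ^ 2 = ∫⁻ x, ‖g x‖ₑ ^ 2 := by
  have hsq (h : V → E) : eLpNorm h 2 volume ^ 2 = ∫⁻ x, ‖h x‖ₑ ^ 2 := by
    simpa using! eLpNorm_nnreal_pow_eq_lintegral (f := h) (μ := volume) (p := 2) two_ne_zero
  rw [← hsq, ← hsq, eLpNorm_two_fourier hg]

end Plancherel

section ChangeOfVariables

theorem lintegral_comp_div_of_pos {c : ℝ} (hc : 0 < c) (g : ℝ → ℝ≥0∞) :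
    ∫⁻ x, g (x / c) = ENNReal.ofReal c * ∫⁻ x, g x := by
  have hmap : Measure.map (· * c⁻¹) volume = ENNReal.ofReal c • (volume : Measure ℝ) := by
    rw [Real.map_volume_mul_right (inv_ne_zero hc.ne'), inv_inv, abs_of_pos hc]
  rw [← smul_eq_mul, ← lintegral_smul_measure, ← hmap]
  exact (lintegral_map_equiv g (MeasurableEquiv.mulRight₀ c⁻¹ (inv_ne_zero hc.ne'))).symm

theorem setLIntegral_re_preimage (s : Set ℝ) {g : ℂ → ℝ≥0∞} (hg : Measurable g) :
    ∫⁻ w in re ⁻¹' s, g w = ∫⁻ u in s, ∫⁻ v, g ⟨u, v⟩ := by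
  have hpre : re ⁻¹' s = measurableEquivRealProd ⁻¹' (s ×ˢ Set.univ) := by ext; simp
  calc ∫⁻ w in re ⁻¹' s, g w
      = ∫⁻ p in s ×ˢ Set.univ, g (measurableEquivRealProd.symm p) ∂volume.prod volume := by
        rw [hpre, ← Measure.volume_eq_prod]
        exact volume_preserving_equiv_real_prod.setLIntegral_comp_preimage_emb
          measurableEquivRealProd.measurableEmbedding (g ∘ measurableEquivRealProd.symm) _
    _ = ∫⁻ u in s, ∫⁻ v, g ⟨u, v⟩ := by
        rw [setLIntegral_prod (fun p ↦ g (measurableEquivRealProd.symm p)) (by fun_prop)]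
        simp only [measurableEquivRealProd_symm_apply, Measure.restrict_univ]

theorem integrable_iff_and_integral_eq_of_lintegral_ofReal_eq {X Y : Type*} [MeasurableSpace X]
    [MeasurableSpace Y] {μ : Measure X} {ν : Measure Y} {φ : X → ℝ} {ψ : Y → ℝ}
    (hφ : AEStronglyMeasurable φ μ) (hψ : AEStronglyMeasurable ψ ν)
    (hφ0 : 0 ≤ᵐ[μ] φ) (hψ0 : 0 ≤ᵐ[ν] ψ)
    (h : ∫⁻ x, ENNReal.ofReal (φ x) ∂μ = ∫⁻ y, ENNReal.ofReal (ψ y) ∂ν) :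
    (Integrable φ μ ↔ Integrable ψ ν) ∧ ∫ x, φ x ∂μ = ∫ y, ψ y ∂ν := by
  constructor
  · rw [← lintegral_ofReal_ne_top_iff_integrable hφ hφ0,
      ← lintegral_ofReal_ne_top_iff_integrable hψ hψ0, h]
  · rw [integral_eq_lintegral_of_nonneg_ae hφ0 hφ, integral_eq_lintegral_of_nonneg_ae hψ0 hψ, h]

end ChangeOfVariables

theorem lintegral_two_mul_rpow_mul_exp_neg {α t : ℝ} (hα : -1 < α) (ht : 0 < t) :
    ∫⁻ u in Set.Ioi 0, ENNReal.ofReal ((2 * u) ^ α * Real.exp (-(2 * t * u))) =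
      ENNReal.ofReal (Real.Gamma (α + 1) * t ^ (-(α + 1)) / 2) := by
  have hvalue : ∫ u in Set.Ioi 0, (2 * u) ^ α * Real.exp (-(2 * t * u)) =
      Real.Gamma (α + 1) * t ^ (-(α + 1)) / 2 := by
    have hscale := integral_comp_mul_left_Ioi
      (fun v ↦ v ^ (α + 1 - 1) * Real.exp (-(t * v))) 0 two_pos
    rw [mul_zero, Real.integral_rpow_mul_exp_neg_mul_Ioi (by linarith) ht, one_div,
      Real.inv_rpow ht.le, ← Real.rpow_neg ht.le, smul_eq_mul, inv_mul_eq_div, mul_comm] at hscale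
    simpa only [add_sub_cancel_right, mul_left_comm t, ← mul_assoc] using hscale
  have hpos : 0 < Real.Gamma (α + 1) * t ^ (-(α + 1)) / 2 := by
    have := Real.Gamma_pos_of_pos (s := α + 1) (by linarith)
    positivity
  rw [← hvalue, ofReal_integral_eq_lintegral_ofReal
    (.of_integral_ne_zero (hvalue.trans_ne hpos.ne'))]
  filter_upwards [ae_restrict_mem measurableSet_Ioi] with u (hu : 0 < u)
  positivity

theorem aestronglyMeasurable_of_exp_smul {E : Type*} [NormedAddCommGroup E] [NormedSpace ℝ E]
    {F : ℝ → E} {a : ℝ} {μ : Measure ℝ}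
    (hF : AEStronglyMeasurable (fun t ↦ Real.exp (-(t * a)) • F t) μ) :
    AEStronglyMeasurable F μ := by
  have hexp : Continuous fun t : ℝ ↦ Real.exp (t * a) := by fun_prop
  refine (hexp.aestronglyMeasurable.smul hF).congr (.of_forall fun t ↦ ?_)
  simp [smul_smul, ← Real.exp_add]

section LaplaceTransform

variable {E : Type*} [NormedAddCommGroup E]

section NormedSpace

variable [NormedSpace ℂ E]

/-- The Laplace transform `s ↦ ∫₀^∞ e^{-ts} F(t) dt` of a vector-valued function on the half-line,
with the Bochner integral's value `0` where the integral diverges. -/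
noncomputable def laplaceTransform (F : ℝ → E) (s : ℂ) : E :=
  ∫ t in Set.Ioi (0 : ℝ), exp (-t * s) • F t

theorem stronglyMeasurable_laplaceTransform {F : ℝ → E}
    (hF : AEStronglyMeasurable F (volume.restrict (Set.Ioi 0))) :
    StronglyMeasurable (laplaceTransform F) := by
  have hmk : laplaceTransform F = laplaceTransform (hF.mk F) := by
    ext s
    refine integral_congr_ae ?_
    filter_upwards [hF.ae_eq_mk] with t ht
    rw [ht]
  rw [hmk]
  have hkernel : Measurable fun p : ℂ × ℝ ↦ exp (-p.2 * p.1) := by fun_prop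
  exact StronglyMeasurable.integral_prod_right'
    (hkernel.stronglyMeasurable.smul (hF.stronglyMeasurable_mk.comp_measurable measurable_snd))

theorem laplaceTransform_add (F : ℝ → E) (a s : ℂ) :
    laplaceTransform F (a + s) = laplaceTransform (fun t ↦ exp (-t * a) • F t) s := by
  simp only [laplaceTransform, smul_smul, ← exp_add, mul_add, add_comm]

theorem laplaceTransform_ofReal_conj (f : ℝ → ℝ) (s : ℂ) :
    laplaceTransform (fun t ↦ (f t : ℂ)) (conj s) =
      conj (laplaceTransform (fun t ↦ (f t : ℂ)) s) := by
  simp only [laplaceTransform, smul_eq_mul, ← integral_conj, map_mul, ← exp_conj, map_neg,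
    conj_ofReal]

theorem laplaceTransform_eq_fourier (F : ℝ → E) (a y : ℝ) :
    laplaceTransform F ⟨a, y⟩ =
      𝓕 ((Set.Ioi 0).indicator fun t ↦ Real.exp (-(t * a)) • F t) (y / (2 * Real.pi)) := by
  have hexp (t : ℝ) : exp (-t * ⟨a, y⟩) =
      exp ((-2 * Real.pi * t * (y / (2 * Real.pi)) : ℝ) * I) * (Real.exp (-(t * a)) : ℝ) := by
    have hfreq : -2 * Real.pi * t * (y / (2 * Real.pi)) = -(t * y) := by field_simp
    rw [hfreq, ofReal_exp, ← exp_add]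
    congr 1
    apply Complex.ext <;> simp
  rw [Real.fourier_real_eq_integral_exp_smul, laplaceTransform,
    ← integral_indicator measurableSet_Ioi]
  simp only [hexp, mul_smul, coe_smul, Set.indicator_smul]

end NormedSpace

variable [InnerProductSpace ℂ E] [CompleteSpace E]

theorem lintegral_enorm_sq_laplaceTransform_vertical {F : ℝ → E} {a : ℝ}
    (hF : IntegrableOn (fun t ↦ Real.exp (-(t * a)) • F t) (Set.Ioi 0)) :
    ∫⁻ y, ‖laplaceTransform F ⟨a, y⟩‖ₑ ^ 2 =
      ENNReal.ofReal (2 * Real.pi) *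
        ∫⁻ t in Set.Ioi 0, ENNReal.ofReal (Real.exp (-(2 * t * a))) * ‖F t‖ₑ ^ 2 := by
  have hsq (t : ℝ) : ‖Real.exp (-(t * a)) • F t‖ₑ ^ 2 =
      ENNReal.ofReal (Real.exp (-(2 * t * a))) * ‖F t‖ₑ ^ 2 := by
    rw [enorm_smul, mul_pow, Real.enorm_eq_ofReal (Real.exp_nonneg _),
      ← ENNReal.ofReal_pow (Real.exp_nonneg _), ← Real.exp_nat_mul]
    congr 4
    push_cast
    ring
  simp only [laplaceTransform_eq_fourier]
  rw [lintegral_comp_div_of_pos Real.two_pi_pos (g := fun ξ ↦ ‖𝓕 (_ : ℝ → E) ξ‖ₑ ^ 2),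
    lintegral_enorm_sq_fourier (hF.integrable_indicator measurableSet_Ioi),
    ← lintegral_indicator measurableSet_Ioi]
  congr 2 with t
  by_cases ht : t ∈ Set.Ioi 0 <;> simp [ht, hsq]

theorem lintegral_rpow_mul_enorm_sq_laplaceTransform_vertical (α : ℝ) {F : ℝ → E} {u : ℝ}
    (hu : 0 ≤ u) (hF : IntegrableOn (fun t ↦ Real.exp (-(t * u)) • F t) (Set.Ioi 0)) :
    ∫⁻ v, ENNReal.ofReal ((2 * u) ^ α) * ‖laplaceTransform F ⟨u, v⟩‖ₑ ^ 2 =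
      ENNReal.ofReal (2 * Real.pi) * ∫⁻ t in Set.Ioi 0,
        ENNReal.ofReal ((2 * u) ^ α * Real.exp (-(2 * t * u))) * ‖F t‖ₑ ^ 2 := by
  rw [lintegral_const_mul' _ _ ENNReal.ofReal_ne_top,
    lintegral_enorm_sq_laplaceTransform_vertical hF, mul_left_comm,
    ← lintegral_const_mul' _ _ ENNReal.ofReal_ne_top]
  simp only [ENNReal.ofReal_mul (Real.rpow_nonneg (mul_nonneg zero_le_two hu) α), mul_assoc]

theorem lintegral_halfPlane_enorm_sq_laplaceTransform {α : ℝ} (hα : -1 < α) {F : ℝ → E}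
    (hF : ∀ u, 0 < u → IntegrableOn (fun t ↦ Real.exp (-(t * u)) • F t) (Set.Ioi 0)) :
    ∫⁻ w in {w : ℂ | 0 < w.re},
        ENNReal.ofReal ((2 * w.re) ^ α) * ‖laplaceTransform F w‖ₑ ^ 2 =
      ENNReal.ofReal (Real.pi * Real.Gamma (α + 1)) *
        ∫⁻ t in Set.Ioi 0, ENNReal.ofReal (t ^ (-(α + 1))) * ‖F t‖ₑ ^ 2 := by
  have hFm : AEStronglyMeasurable F (volume.restrict (Set.Ioi 0)) :=
    aestronglyMeasurable_of_exp_smul (hF 1 one_pos).aestronglyMeasurable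
  have hLm := stronglyMeasurable_laplaceTransform hFm
  have hweight (t : ℝ) (ht : t ∈ Set.Ioi 0) :
      ∫⁻ u in Set.Ioi 0, ENNReal.ofReal ((2 * u) ^ α * Real.exp (-(2 * t * u))) * ‖F t‖ₑ ^ 2 =
        ENNReal.ofReal (Real.Gamma (α + 1) / 2) *
          (ENNReal.ofReal (t ^ (-(α + 1))) * ‖F t‖ₑ ^ 2) := by
    rw [lintegral_mul_const' _ _ (by finiteness), lintegral_two_mul_rpow_mul_exp_neg hα ht,
      mul_div_right_comm, ENNReal.ofReal_mul' (Real.rpow_nonneg (le_of_lt ht) _), mul_assoc]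
  calc ∫⁻ w in {w : ℂ | 0 < w.re},
        ENNReal.ofReal ((2 * w.re) ^ α) * ‖laplaceTransform F w‖ₑ ^ 2
      = ∫⁻ u in Set.Ioi 0, ∫⁻ v,
          ENNReal.ofReal ((2 * u) ^ α) * ‖laplaceTransform F ⟨u, v⟩‖ₑ ^ 2 :=
        setLIntegral_re_preimage (Set.Ioi 0)
          (g := fun w ↦ ENNReal.ofReal ((2 * w.re) ^ α) * ‖laplaceTransform F w‖ₑ ^ 2)
          (by have := hLm.enorm; fun_prop)
    _ = ENNReal.ofReal (2 * Real.pi) * ∫⁻ u in Set.Ioi 0, ∫⁻ t in Set.Ioi 0,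
          ENNReal.ofReal ((2 * u) ^ α * Real.exp (-(2 * t * u))) * ‖F t‖ₑ ^ 2 := by
        rw [setLIntegral_congr_fun measurableSet_Ioi fun u hu ↦
            lintegral_rpow_mul_enorm_sq_laplaceTransform_vertical α (le_of_lt hu) (hF u hu),
          lintegral_const_mul' _ _ ENNReal.ofReal_ne_top]
    _ = ENNReal.ofReal (2 * Real.pi) * ∫⁻ t in Set.Ioi 0, ∫⁻ u in Set.Ioi 0,
          ENNReal.ofReal ((2 * u) ^ α * Real.exp (-(2 * t * u))) * ‖F t‖ₑ ^ 2 := by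
        have := hFm.enorm.comp_snd (μ := volume.restrict (Set.Ioi (0 : ℝ)))
        rw [lintegral_lintegral_swap (by simp only [Function.uncurry_def]; fun_prop)]
    _ = ENNReal.ofReal (Real.pi * Real.Gamma (α + 1)) *
          ∫⁻ t in Set.Ioi 0, ENNReal.ofReal (t ^ (-(α + 1))) * ‖F t‖ₑ ^ 2 := by
        rw [setLIntegral_congr_fun measurableSet_Ioi hweight,
          lintegral_const_mul' _ _ ENNReal.ofReal_ne_top, ← mul_assoc,
          ← ENNReal.ofReal_mul Real.two_pi_pos.le]
        ring_nf

end LaplaceTransform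

section LaplaceKernel

variable {α : ℝ} {f : ℝ → ℝ} {z : ℂ}

theorem laplaceKernel_eq_conj_laplaceTransform (w : ℂ) :
    laplaceKernel α f z w = ((2 * z.re) ^ (α / 2) * (2 * w.re) ^ (α / 2) : ℝ) *
      conj (laplaceTransform (fun t ↦ exp (-t * conj z) • (f t : ℂ)) w) := by
  -- `f` is real, so conjugating its Laplace transform at `conj z + w` gives it at `z + conj w`.
  rw [← laplaceTransform_add, ← laplaceTransform_ofReal_conj, map_add, conj_conj]
  simp only [laplaceKernel, laplaceTransform, smul_eq_mul, mul_comm]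

theorem stronglyMeasurable_laplaceKernel
    (hf : AEStronglyMeasurable f (volume.restrict (Set.Ioi 0))) :
    StronglyMeasurable (laplaceKernel α f z) := by
  have hexp : Continuous fun t : ℝ ↦ exp (-t * conj z) := by fun_prop
  have hlaplace := stronglyMeasurable_laplaceTransform
    (hexp.aestronglyMeasurable.smul (continuous_ofReal.comp_aestronglyMeasurable hf))
  have hweight : Measurable fun w : ℂ ↦
      (((2 * z.re) ^ (α / 2) * (2 * w.re) ^ (α / 2) : ℝ) : ℂ) := by fun_prop
  rw [funext laplaceKernel_eq_conj_laplaceTransform]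
  exact hweight.stronglyMeasurable.mul (continuous_conj.comp_stronglyMeasurable hlaplace)

theorem norm_exp_neg_ofReal_mul_conj (t : ℝ) (z : ℂ) :
    ‖exp (-t * conj z)‖ = Real.exp (-(t * z.re)) := by
  simp [norm_exp]

theorem enorm_sq_laplaceKernel (hz : 0 ≤ z.re) {w : ℂ} (hw : 0 ≤ w.re) :
    ‖laplaceKernel α f z w‖ₑ ^ 2 = ENNReal.ofReal ((2 * z.re) ^ α) *
      (ENNReal.ofReal ((2 * w.re) ^ α) *
        ‖laplaceTransform (fun t ↦ exp (-t * conj z) • (f t : ℂ)) w‖ₑ ^ 2) := by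
  have hsq {x : ℝ} (hx : 0 ≤ x) : (x ^ (α / 2)) ^ 2 = x ^ α := by
    rw [← Real.rpow_mul_natCast hx, Nat.cast_ofNat, div_mul_cancel₀ α two_ne_zero]
  have hz0 : 0 ≤ 2 * z.re := by positivity
  have hw0 : 0 ≤ 2 * w.re := by positivity
  rw [laplaceKernel_eq_conj_laplaceTransform, enorm_mul, RCLike.enorm_conj, mul_pow, ← mul_assoc,
    ← ofReal_norm, norm_real, ← ENNReal.ofReal_pow (norm_nonneg _), Real.norm_eq_abs, sq_abs,
    mul_pow, hsq hz0, hsq hw0, ENNReal.ofReal_mul (by positivity)]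

theorem integrableOn_exp_smul_exp_smul_of_integrableOn {x : ℝ}
    (hf : IntegrableOn (fun t ↦ f t * Real.exp (-(t * (z.re + x)))) (Set.Ioi 0)) :
    IntegrableOn (fun t ↦ Real.exp (-(t * x)) • exp (-t * conj z) • (f t : ℂ)) (Set.Ioi 0) := by
  have hfm : AEStronglyMeasurable f (volume.restrict (Set.Ioi 0)) :=
    aestronglyMeasurable_of_exp_smul (a := z.re + x)
      (hf.aestronglyMeasurable.congr (.of_forall fun t ↦ mul_comm _ _))
  have hfmC : AEStronglyMeasurable (fun t ↦ (f t : ℂ)) (volume.restrict (Set.Ioi 0)) :=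
    continuous_ofReal.comp_aestronglyMeasurable hfm
  refine hf.congr' (by fun_prop) (.of_forall fun t ↦ ?_)
  rw [norm_smul, norm_smul, norm_mul, norm_exp_neg_ofReal_mul_conj, norm_real,
    Real.norm_of_nonneg (Real.exp_nonneg _), Real.norm_of_nonneg (Real.exp_nonneg _),
    mul_add, neg_add, Real.exp_add]
  ring

theorem lintegral_halfPlane_enorm_sq_laplaceKernel (hα : -1 < α) (hz : 0 ≤ z.re)
    (hf : ∀ x, z.re < x → IntegrableOn (fun t ↦ f t * Real.exp (-(t * x))) (Set.Ioi 0)) :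
    ∫⁻ w in {w : ℂ | 0 < w.re}, ‖laplaceKernel α f z w‖ₑ ^ 2 =
      ENNReal.ofReal ((2 * z.re) ^ α) * (ENNReal.ofReal (Real.pi * Real.Gamma (α + 1)) *
        ∫⁻ s in Set.Ioi 0, ENNReal.ofReal
          (Real.exp (-(2 * z.re * s)) * f s ^ 2 * s ^ (-(α + 1)))) := by
  have hbergman := lintegral_halfPlane_enorm_sq_laplaceTransform hα
    (F := fun t ↦ exp (-t * conj z) • (f t : ℂ))
    fun u hu ↦ integrableOn_exp_smul_exp_smul_of_integrableOn (hf (z.re + u) (by linarith))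
  have hdamped (s : ℝ) : ‖exp (-s * conj z) • (f s : ℂ)‖ₑ ^ 2 =
      ENNReal.ofReal (Real.exp (-(2 * z.re * s)) * f s ^ 2) := by
    rw [← ofReal_norm, norm_smul, norm_exp_neg_ofReal_mul_conj, norm_real,
      ← ENNReal.ofReal_pow (by positivity), mul_pow, Real.norm_eq_abs, sq_abs, ← Real.exp_nat_mul]
    ring_nf
  rw [setLIntegral_congr_fun (measurableSet_lt measurable_const measurable_re)
      fun w hw ↦ enorm_sq_laplaceKernel hz (le_of_lt hw),
    lintegral_const_mul' _ _ ENNReal.ofReal_ne_top, hbergman]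
  congr 2
  refine setLIntegral_congr_fun measurableSet_Ioi fun s (hs : 0 < s) ↦ ?_
  rw [hdamped, ← ENNReal.ofReal_mul (by positivity), mul_comm]

end LaplaceKernel

theorem laplaceKernel_square_integral_general {α : ℝ} (hα : -1 < α) {f : ℝ → ℝ} {z : ℂ}
    (hz : 0 < z.re)
    (hf : ∀ x, z.re < x → IntegrableOn (fun t ↦ f t * Real.exp (-(t * x))) (Set.Ioi 0)) :
    (IntegrableOn (fun w ↦ ‖laplaceKernel α f z w‖ ^ 2) {w : ℂ | 0 < w.re} ↔
      IntegrableOn (fun s ↦ Real.exp (-(2 * z.re * s)) * f s ^ 2 * Real.Gamma (α + 1) *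
        s ^ (-(α + 1))) (Set.Ioi 0)) ∧
    (1 / Real.pi) * ∫ w in {w : ℂ | 0 < w.re}, ‖laplaceKernel α f z w‖ ^ 2 =
      (2 * z.re) ^ α * ∫ s in Set.Ioi (0 : ℝ),
        Real.exp (-(2 * z.re * s)) * f s ^ 2 * Real.Gamma (α + 1) * s ^ (-(α + 1)) := by
  have hfm : AEStronglyMeasurable f (volume.restrict (Set.Ioi 0)) :=
    aestronglyMeasurable_of_exp_smul (a := z.re + 1)
      ((hf _ (lt_add_one _)).aestronglyMeasurable.congr (.of_forall fun t ↦ mul_comm _ _))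
  have hKm : StronglyMeasurable fun w ↦ 1 / Real.pi * ‖laplaceKernel α f z w‖ ^ 2 :=
    ((stronglyMeasurable_laplaceKernel hfm).norm.pow 2).const_mul _
  have hx : 0 < (2 * z.re) ^ α := by positivity
  have hΓ : 0 < Real.Gamma (α + 1) := Real.Gamma_pos_of_pos (by linarith)
  have hlintegral :
      ∫⁻ w in {w : ℂ | 0 < w.re}, ENNReal.ofReal (1 / Real.pi * ‖laplaceKernel α f z w‖ ^ 2) =
        ∫⁻ s in Set.Ioi 0, ENNReal.ofReal ((2 * z.re) ^ α *
          (Real.exp (-(2 * z.re * s)) * f s ^ 2 * Real.Gamma (α + 1) * s ^ (-(α + 1)))) := by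
    simp only [ENNReal.ofReal_mul (one_div_nonneg.2 Real.pi_nonneg),
      ENNReal.ofReal_pow (norm_nonneg _), ofReal_norm]
    rw [lintegral_const_mul' _ _ ENNReal.ofReal_ne_top,
      lintegral_halfPlane_enorm_sq_laplaceKernel hα hz.le hf, ← mul_assoc, ← mul_assoc,
      ← lintegral_const_mul' _ _ (by finiteness), ← ENNReal.ofReal_mul (by positivity),
      ← ENNReal.ofReal_mul (by positivity)]
    refine lintegral_congr fun s ↦ ?_
    rw [← ENNReal.ofReal_mul (by positivity)]
    field_simp
  obtain ⟨hiff, heq⟩ := integrable_iff_and_integral_eq_of_lintegral_ofReal_eq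
    hKm.aestronglyMeasurable (by fun_prop)
    (.of_forall fun w ↦ by positivity)
    (by filter_upwards [ae_restrict_mem measurableSet_Ioi] with s (hs : 0 < s); positivity)
    hlintegral
  rw [integrable_const_mul_iff (by simp), integrable_const_mul_iff (by simp [hx.ne'])] at hiff
  rw [integral_const_mul, integral_const_mul] at heq
  exact ⟨hiff, heq⟩

/-- For a Borel measurable `f` with suitable integrability,
    `∫_{H₊} |K_f(z,w)|² dA(w) = (2x)^α ∫₀^∞ e^{-2xs} f(s)² Γ(α+1) s^{-(α+1)} ds`,
    with `x = Re z` and `dA` Lebesgue measure divided by π. -/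
theorem laplaceKernel_square_integral (α : ℝ) (hα : -1 < α) (f : ℝ → ℝ)
    (hf : Measurable f)
    (hint : ∀ x : ℝ, 0 < x →
      IntegrableOn (fun t => f t * Real.exp (-(t * x))) (Set.Ioi 0))
    (z : ℂ) (hz : 0 < z.re)
    (hsq : IntegrableOn (fun w => ‖laplaceKernel α f z w‖ ^ 2) {w : ℂ | 0 < w.re}) :
    (1 / Real.pi) * ∫ w in {w : ℂ | 0 < w.re}, ‖laplaceKernel α f z w‖ ^ 2
      = (2 * z.re) ^ α *
        ∫ s in Set.Ioi (0 : ℝ),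
          Real.exp (-(2 * z.re * s)) * (f s) ^ 2 * Real.Gamma (α + 1) * s ^ (-(α + 1)) :=
  (laplaceKernel_square_integral_general hα hz fun x hx ↦ hint x (hz.trans hx)).2
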